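/- arXiv:1509.06344 — 3 statements merged into one kernel-verified Lean document; each statement's English description precedes it below -/
import Mathlib

section
/- Let (u,v) ∈ ℝ² with 0 < u² + v² ≤ 1, and define (x,y) by the Simple Stretching disc-to-square map: x = sgn(u)·√(u² + v²) and y = sgn(u)·(v/u)·√(u² + v²) when u² ≥ v², and x = sgn(v)·(u/v)·√(u² + v²) and y = sgn(v)·√(u² + v²) when u² < v². Then (x,y) ∈ [-1,1] × [-1,1], and applying the Simple Stretching square-to-disc map to (x,y) recovers (u,v): if x² ≥ y² then sgn(x)·x²/√(x² + y²) = u and sgn(x)·x·y/√(x² + y²) = v, and if x² < y² then sgn(y)·x·y/√(x² + y²) = u and sgn(y)·y²/√(x² + y²) = v. -/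
/-!
The Euclidean unit disc has gauge `√(u² + v²)` and the square `[-1, 1]²` has gauge
`max |x| |y|`. Both Simple Stretching maps are the radial maps exchanging these two gauges: each
point moves along its ray until its gauge in the target set equals its original gauge in the
source set. Such a map is undone by exchanging the gauges back, and it preserves the condition
`gauge ≤ 1`. The case distinction and the signs in the explicit formulas come from writing
`max |x| |y|` as `|x|` or `|y|` and `|a|` as `sgn(a) · a`.
-/

open Set

theorem real_sign_mul_self (a : ℝ) : Real.sign a * a = |a| := by
  rcases lt_trichotomy a 0 with ha | rfl | ha
  · rw [Real.sign_of_neg ha, neg_one_mul, abs_of_neg ha]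
  · rw [mul_zero, abs_zero]
  · rw [Real.sign_of_pos ha, one_mul, abs_of_pos ha]

theorem real_sign_div_self (a : ℝ) : Real.sign a / a = |a|⁻¹ := by
  rw [← real_sign_mul_self, mul_inv, Real.inv_sign, div_eq_mul_inv]

theorem real_sign_eq_self_div_abs (a : ℝ) : Real.sign a = a / |a| := by
  rcases eq_or_ne a 0 with rfl | ha
  · rw [Real.sign_zero, zero_div]
  · rw [div_eq_mul_inv, ← real_sign_div_self, mul_div_cancel₀ _ ha]

theorem gauge_preimage {E F : Type*} [AddCommGroup E] [Module ℝ E] [AddCommGroup F] [Module ℝ F]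
    (f : E →ₗ[ℝ] F) (s : Set F) (x : E) : gauge (f ⁻¹' s) x = gauge s (f x) := by
  simp only [gauge_def', mem_preimage, map_smul]

theorem norm_toLp_two_prod (p : ℝ × ℝ) : ‖WithLp.toLp 2 p‖ = √(p.1 ^ 2 + p.2 ^ 2) := by
  simp only [WithLp.prod_norm_eq_of_L2, WithLp.toLp_fst, WithLp.toLp_snd, Real.norm_eq_abs, sq_abs]

/-- The closed unit disc `D`, written in coordinates because the norm of `ℝ × ℝ` is the maximum
norm. -/
def unitDisc : Set (ℝ × ℝ) := {p | p.1 ^ 2 + p.2 ^ 2 ≤ 1}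

/-- The square `S = [-1, 1] × [-1, 1]`. -/
def unitSquare : Set (ℝ × ℝ) := Icc (-1) 1 ×ˢ Icc (-1) 1

theorem unitDisc_eq_preimage_closedBall :
    unitDisc = (WithLp.linearEquiv 2 ℝ (ℝ × ℝ)).symm.toLinearMap ⁻¹' Metric.closedBall 0 1 := by
  ext p
  simp [unitDisc, norm_toLp_two_prod]

theorem unitSquare_eq_closedBall : unitSquare = Metric.closedBall 0 1 := by
  rw [← Prod.mk_zero_zero, ← closedBall_prod_same, Real.closedBall_eq_Icc, zero_sub, zero_add,
    unitSquare]

theorem gauge_unitDisc (p : ℝ × ℝ) : gauge unitDisc p = ‖WithLp.toLp 2 p‖ := by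
  rw [unitDisc_eq_preimage_closedBall, gauge_preimage, gauge_closedBall zero_le_one, div_one]
  rfl

theorem gauge_unitSquare (p : ℝ × ℝ) : gauge unitSquare p = ‖p‖ := by
  rw [unitSquare_eq_closedBall, gauge_closedBall zero_le_one, div_one]

/-- The Simple Stretching disc-to-square map, encoded without case distinction as a radial map and
extended to the whole plane, with `0 ↦ 0`. -/
noncomputable def discToSquare : ℝ × ℝ → ℝ × ℝ := gaugeRescale unitDisc unitSquare

/-- The Simple Stretching square-to-disc map, encoded without case distinction as a radial map and
extended to the whole plane, with `0 ↦ 0`. -/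
noncomputable def squareToDisc : ℝ × ℝ → ℝ × ℝ := gaugeRescale unitSquare unitDisc

theorem discToSquare_apply (p : ℝ × ℝ) :
    discToSquare p = (√(p.1 ^ 2 + p.2 ^ 2) / ‖p‖) • p := by
  rw [discToSquare, gaugeRescale_def, gauge_unitDisc, norm_toLp_two_prod, gauge_unitSquare]

theorem squareToDisc_apply (p : ℝ × ℝ) :
    squareToDisc p = (‖p‖ / √(p.1 ^ 2 + p.2 ^ 2)) • p := by
  rw [squareToDisc, gaugeRescale_def, gauge_unitDisc, norm_toLp_two_prod, gauge_unitSquare]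

theorem squareToDisc_discToSquare (p : ℝ × ℝ) : squareToDisc (discToSquare p) = p := by
  have hbounded : Bornology.IsVonNBounded ℝ unitSquare := by
    rw [unitSquare_eq_closedBall]
    exact NormedSpace.isVonNBounded_closedBall ℝ _ _
  have habsorbent : Absorbent ℝ unitSquare := by
    rw [unitSquare_eq_closedBall]
    exact absorbent_nhds_zero (Metric.closedBall_mem_nhds 0 one_pos)
  rw [squareToDisc, discToSquare, gaugeRescale_gaugeRescale habsorbent hbounded]
  rcases eq_or_ne p 0 with rfl | hp
  · exact gaugeRescale_zero _ _
  · have hgauge : gauge unitDisc p ≠ 0 := by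
      rw [gauge_unitDisc]
      exact norm_ne_zero_iff.2 ((WithLp.toLp_eq_zero 2).not.2 hp)
    rw [gaugeRescale_def, div_self hgauge, one_smul]

theorem mapsTo_discToSquare : MapsTo discToSquare unitDisc unitSquare := by
  intro p hp
  have hnorm : ‖discToSquare p‖ ≤ 1 := by
    rw [← gauge_unitSquare]
    exact (gauge_gaugeRescale_le unitDisc unitSquare p).trans (gauge_le_one_of_mem hp)
  rwa [unitSquare_eq_closedBall, mem_closedBall_zero_iff]

theorem norm_mk_of_sq_le {a b : ℝ} (h : b ^ 2 ≤ a ^ 2) : ‖(a, b)‖ = |a| :=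
  max_eq_left (sq_le_sq.1 h)

theorem norm_mk_of_le_sq {a b : ℝ} (h : a ^ 2 ≤ b ^ 2) : ‖(a, b)‖ = |b| :=
  max_eq_right (sq_le_sq.1 h)

theorem discToSquare_mk_of_sq_le {u v : ℝ} (h : v ^ 2 ≤ u ^ 2) :
    discToSquare (u, v) =
      (Real.sign u * √(u ^ 2 + v ^ 2), Real.sign u * (v / u) * √(u ^ 2 + v ^ 2)) := by
  rw [discToSquare_apply, norm_mk_of_sq_le h, Prod.smul_mk, smul_eq_mul, smul_eq_mul]
  congr 1
  · rw [real_sign_eq_self_div_abs]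
    ring
  · rw [div_eq_mul_inv, ← real_sign_div_self]
    ring

theorem discToSquare_mk_of_le_sq {u v : ℝ} (h : u ^ 2 ≤ v ^ 2) :
    discToSquare (u, v) =
      (Real.sign v * (u / v) * √(u ^ 2 + v ^ 2), Real.sign v * √(u ^ 2 + v ^ 2)) := by
  rw [discToSquare_apply, norm_mk_of_le_sq h, Prod.smul_mk, smul_eq_mul, smul_eq_mul]
  congr 1
  · rw [div_eq_mul_inv, ← real_sign_div_self]
    ring
  · rw [real_sign_eq_self_div_abs]
    ring

theorem squareToDisc_mk_of_sq_le {x y : ℝ} (h : y ^ 2 ≤ x ^ 2) :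
    squareToDisc (x, y) =
      (Real.sign x * x ^ 2 / √(x ^ 2 + y ^ 2), Real.sign x * (x * y) / √(x ^ 2 + y ^ 2)) := by
  rw [squareToDisc_apply, norm_mk_of_sq_le h, Prod.smul_mk, smul_eq_mul, smul_eq_mul,
    ← real_sign_mul_self]
  congr 1 <;> ring

theorem squareToDisc_mk_of_le_sq {x y : ℝ} (h : x ^ 2 ≤ y ^ 2) :
    squareToDisc (x, y) =
      (Real.sign y * (x * y) / √(x ^ 2 + y ^ 2), Real.sign y * y ^ 2 / √(x ^ 2 + y ^ 2)) := by
  rw [squareToDisc_apply, norm_mk_of_le_sq h, Prod.smul_mk, smul_eq_mul, smul_eq_mul,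
    ← real_sign_mul_self]
  congr 1 <;> ring

/-- The Simple Stretching disc-to-square map lands in the square and is a
right inverse of the Simple Stretching square-to-disc map. -/
theorem simple_stretching_right_inverse
    (u v x y : ℝ)
    (hd0 : 0 < u ^ 2 + v ^ 2) (hd1 : u ^ 2 + v ^ 2 ≤ 1)
    (hx : x = if u ^ 2 ≥ v ^ 2 then Real.sign u * Real.sqrt (u ^ 2 + v ^ 2)
              else Real.sign v * (u / v) * Real.sqrt (u ^ 2 + v ^ 2))
    (hy : y = if u ^ 2 ≥ v ^ 2 then Real.sign u * (v / u) * Real.sqrt (u ^ 2 + v ^ 2)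
              else Real.sign v * Real.sqrt (u ^ 2 + v ^ 2)) :
    x ∈ Set.Icc (-1 : ℝ) 1 ∧ y ∈ Set.Icc (-1 : ℝ) 1 ∧
    (x ^ 2 ≥ y ^ 2 →
      Real.sign x * x ^ 2 / Real.sqrt (x ^ 2 + y ^ 2) = u ∧
      Real.sign x * (x * y) / Real.sqrt (x ^ 2 + y ^ 2) = v) ∧
    (x ^ 2 < y ^ 2 →
      Real.sign y * (x * y) / Real.sqrt (x ^ 2 + y ^ 2) = u ∧
      Real.sign y * y ^ 2 / Real.sqrt (x ^ 2 + y ^ 2) = v) := by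
  have hxy : discToSquare (u, v) = (x, y) := by
    rw [hx, hy]
    split_ifs with h
    · exact discToSquare_mk_of_sq_le h
    · exact discToSquare_mk_of_le_sq (not_le.1 h).le
  have huv : squareToDisc (x, y) = (u, v) := by
    rw [← hxy, squareToDisc_discToSquare]
  have hmem : (x, y) ∈ unitSquare := hxy ▸ mapsTo_discToSquare hd1
  refine ⟨hmem.1, hmem.2, fun h ↦ ?_, fun h ↦ ?_⟩
  · rwa [squareToDisc_mk_of_sq_le h, Prod.mk_inj] at huv
  · rwa [squareToDisc_mk_of_le_sq h.le, Prod.mk_inj] at huv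
end

section
/- Let (x,y) ∈ [-1,1] × [-1,1] with x ≠ 0 and y ≠ 0, and define u = x/√(1 + x²y²) and v = y/√(1 + x²y²). Then 1 − 4u²v² ≥ 0 and the 2-Squircular disc-to-square formulas recover (x,y): sgn(u·v)/(v·√2) · √(1 − √(1 − 4u²v²)) = x and sgn(u·v)/(u·√2) · √(1 − √(1 − 4u²v²)) = y. -/
/-!
With `t = x * y`, the two disc coordinates satisfy `u * v = t / (1 + t ^ 2)`. The parametrization
`t ↦ ((1 - t ^ 2) / (1 + t ^ 2), 2 * t / (1 + t ^ 2))` of the unit circle therefore turns the inner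
square root into `(1 - t ^ 2) / (1 + t ^ 2)` as long as `|t| ≤ 1`, and the outer one into
`√2 * |t| / √(1 + t ^ 2)`. The sign factor converts `|t|` back to `t = x * y`, and dividing by
either factor leaves the other.
-/

theorem one_sub_four_mul_div_one_add_sq_sq {K : Type*} [Field K] {t : K} (ht : 1 + t ^ 2 ≠ 0) :
    1 - 4 * (t / (1 + t ^ 2)) ^ 2 = ((1 - t ^ 2) / (1 + t ^ 2)) ^ 2 := by
  field_simp
  ring

theorem sqrt_one_sub_four_mul_div_one_add_sq_sq {t : ℝ} (ht : |t| ≤ 1) :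
    √(1 - 4 * (t / (1 + t ^ 2)) ^ 2) = (1 - t ^ 2) / (1 + t ^ 2) := by
  have hnum : 0 ≤ 1 - t ^ 2 := sub_nonneg.mpr ((sq_le_one_iff_abs_le_one t).mpr ht)
  rw [one_sub_four_mul_div_one_add_sq_sq (by positivity), Real.sqrt_sq (by positivity)]

theorem sqrt_one_sub_sqrt_one_sub_four_mul_div_one_add_sq_sq {t : ℝ} (ht : |t| ≤ 1) :
    √(1 - √(1 - 4 * (t / (1 + t ^ 2)) ^ 2)) = √2 * |t| / √(1 + t ^ 2) := by
  have hsub : 1 - (1 - t ^ 2) / (1 + t ^ 2) = 2 * t ^ 2 / (1 + t ^ 2) := by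
    field_simp
    ring
  rw [sqrt_one_sub_four_mul_div_one_add_sq_sq ht, hsub, Real.sqrt_div (by positivity),
    Real.sqrt_mul zero_le_two, Real.sqrt_sq_eq_abs]

theorem real_sign_div_of_pos (a : ℝ) {b : ℝ} (hb : 0 < b) : Real.sign (a / b) = Real.sign a := by
  obtain ha | rfl | ha := lt_trichotomy a 0
  · rw [Real.sign_of_neg ha, Real.sign_of_neg (div_neg_of_neg_of_pos ha hb)]
  · rw [zero_div]
  · rw [Real.sign_of_pos ha, Real.sign_of_pos (div_pos ha hb)]

theorem real_sign_mul_abs (a : ℝ) : Real.sign a * |a| = a := by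
  obtain ha | rfl | ha := lt_trichotomy a 0
  · rw [Real.sign_of_neg ha, abs_of_neg ha, neg_one_mul, neg_neg]
  · rw [abs_zero, mul_zero]
  · rw [Real.sign_of_pos ha, abs_of_pos ha, one_mul]

theorem div_sqrt_mul_div_sqrt (x y : ℝ) {a : ℝ} (ha : 0 ≤ a) :
    x / √a * (y / √a) = x * y / a := by
  rw [div_mul_div_comm, Real.mul_self_sqrt ha]

/-- The first coordinate of the 2-Squircular disc-to-square map. The formulas are symmetric in
`u` and `v`, so the second coordinate is `discToSquareFst v u`. -/
noncomputable def discToSquareFst (u v : ℝ) : ℝ :=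
  Real.sign (u * v) / (v * √2) * √(1 - √(1 - 4 * u ^ 2 * v ^ 2))

theorem discToSquareFst_div_sqrt {x y : ℝ} (hxy : |x * y| ≤ 1) (hy : y ≠ 0) :
    discToSquareFst (x / √(1 + (x * y) ^ 2)) (y / √(1 + (x * y) ^ 2)) = x := by
  calc
    _ = Real.sign (x * y) / (y / √(1 + (x * y) ^ 2) * √2) *
          (√2 * |x * y| / √(1 + (x * y) ^ 2)) := by
      rw [discToSquareFst, mul_assoc 4, ← mul_pow _ _ 2, div_sqrt_mul_div_sqrt x y (by positivity),
        real_sign_div_of_pos _ (by positivity),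
        sqrt_one_sub_sqrt_one_sub_four_mul_div_one_add_sq_sq hxy]
    _ = Real.sign (x * y) * |x * y| / y := by field_simp
    _ = x := by rw [real_sign_mul_abs, mul_div_cancel_right₀ x hy]

theorem two_squircular_left_inverse_general
    (x y u v : ℝ) (hxy : |x * y| ≤ 1) (hx0 : x ≠ 0) (hy0 : y ≠ 0)
    (hu : u = x / √(1 + x ^ 2 * y ^ 2)) (hv : v = y / √(1 + x ^ 2 * y ^ 2)) :
    1 - 4 * u ^ 2 * v ^ 2 ≥ 0 ∧
    Real.sign (u * v) / (v * √2) * √(1 - √(1 - 4 * u ^ 2 * v ^ 2)) = x ∧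
    Real.sign (u * v) / (u * √2) * √(1 - √(1 - 4 * u ^ 2 * v ^ 2)) = y := by
  rw [← mul_pow] at hu hv
  have huv : u * v = x * y / (1 + (x * y) ^ 2) := by
    rw [hu, hv, div_sqrt_mul_div_sqrt x y (by positivity)]
  have hfst : discToSquareFst u v = x := by rw [hu, hv, discToSquareFst_div_sqrt hxy hy0]
  have hsnd : discToSquareFst v u = y := by
    rw [hu, hv, mul_comm x y, discToSquareFst_div_sqrt (mul_comm x y ▸ hxy) hx0]
  refine ⟨?_, hfst, ?_⟩
  · rw [mul_assoc, ← mul_pow, huv, one_sub_four_mul_div_one_add_sq_sq (by positivity)]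
    exact sq_nonneg _
  · rwa [discToSquareFst, mul_comm v, mul_right_comm] at hsnd

/-- The 2-Squircular disc-to-square formulas invert the square-to-disc map. -/
theorem two_squircular_left_inverse
    (x y u v : ℝ)
    (hx : x ∈ Set.Icc (-1 : ℝ) 1) (hy : y ∈ Set.Icc (-1 : ℝ) 1)
    (hx0 : x ≠ 0) (hy0 : y ≠ 0)
    (hu : u = x / Real.sqrt (1 + x ^ 2 * y ^ 2))
    (hv : v = y / Real.sqrt (1 + x ^ 2 * y ^ 2)) :
    1 - 4 * u ^ 2 * v ^ 2 ≥ 0 ∧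
    Real.sign (u * v) / (v * Real.sqrt 2) *
      Real.sqrt (1 - Real.sqrt (1 - 4 * u ^ 2 * v ^ 2)) = x ∧
    Real.sign (u * v) / (u * Real.sqrt 2) *
      Real.sqrt (1 - Real.sqrt (1 - 4 * u ^ 2 * v ^ 2)) = y := by
  have hxy : |x * y| ≤ 1 :=
    abs_mul x y ▸ mul_le_one₀ (abs_le.mpr hx) (abs_nonneg y) (abs_le.mpr hy)
  exact two_squircular_left_inverse_general x y u v hxy hx0 hy0 hu hv
end

section
/- Let (u,v) ∈ ℝ² with u² + v² ≤ 1, u ≠ 0 and v ≠ 0, and define x = sgn(u·v)/(v·√2) · √(1 − √(1 − 4u²v²)) and y = sgn(u·v)/(u·√2) · √(1 − √(1 − 4u²v²)). Then 1 − 4u²v² ≥ 0, and the 2-Squircular square-to-disc map recovers (u,v): x/√(1 + x²y²) = u and y/√(1 + x²y²) = v. -/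
/-!
The square-to-disc map divides both coordinates by `√(1 + x²y²)`, so a preimage of `(u, v)` is
`(uw, vw)` with `w > 0` and `1 + (uv)²w⁴ = w²`. This is a quadratic equation for `w²` with
discriminant `1 - 4(uv)²`; the disc-to-square formulas pick its smaller root.
-/

/-- The factor `w` by which the disc-to-square map stretches a point `(u, v)` with `u * v = t`:
`w ^ 2` is the smaller root of `t ^ 2 * z ^ 2 - z + 1` when `0 < |t| ≤ 1 / 2`. The value at `t = 0`
is junk: it is `0`, whereas the limit is `1`. -/
noncomputable def squircularScale (t : ℝ) : ℝ :=
  √((1 - √(1 - 4 * t ^ 2)) / (2 * t ^ 2))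

theorem four_mul_sq_mul_sq_le_one {R : Type*} [CommRing R] [LinearOrder R] [IsStrictOrderedRing R]
    {u v : R} (h : u ^ 2 + v ^ 2 ≤ 1) : 4 * u ^ 2 * v ^ 2 ≤ 1 :=
  (four_mul_le_sq_add _ _).trans (pow_le_one₀ (by positivity) h)

theorem sign_div_self_eq_inv_abs (t : ℝ) : Real.sign t / t = |t|⁻¹ := by
  obtain h | rfl | h := lt_trichotomy t 0
  · rw [Real.sign_of_neg h, abs_of_neg h, neg_div, one_div, inv_neg]
  · simp
  · rw [Real.sign_of_pos h, abs_of_pos h, one_div]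

theorem sign_div_mul_sqrt_mul_sqrt {b : ℝ} (hb : 0 ≤ b) (a t : ℝ) :
    Real.sign t / (t * √b) * √a = √(a / (b * t ^ 2)) := by
  rw [Real.sqrt_div' a (by positivity), Real.sqrt_mul hb, Real.sqrt_sq_eq_abs, ← div_div,
    sign_div_self_eq_inv_abs]
  ring

theorem squircularScale_pos {t : ℝ} (ht : t ≠ 0) : 0 < squircularScale t := by
  have ht2 : 0 < t ^ 2 := by positivity
  have hr : √(1 - 4 * t ^ 2) < 1 := (Real.sqrt_lt' one_pos).2 (by linarith)
  exact Real.sqrt_pos.2 (div_pos (sub_pos.2 hr) (by positivity))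

theorem one_add_sq_mul_squircularScale_pow_four {t : ℝ} (ht : t ≠ 0) (h : 4 * t ^ 2 ≤ 1) :
    1 + t ^ 2 * squircularScale t ^ 4 = squircularScale t ^ 2 := by
  have hw : squircularScale t ^ 2 = (-(-1) - √(1 - 4 * t ^ 2)) / (2 * t ^ 2) := by
    rw [neg_neg]
    exact Real.sq_sqrt (Real.sqrt_pos.1 (squircularScale_pos ht)).le
  have hdiscrim : discrim (t ^ 2) (-1) 1 = √(1 - 4 * t ^ 2) * √(1 - 4 * t ^ 2) := by
    rw [Real.mul_self_sqrt (sub_nonneg.2 h), discrim]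
    ring
  linarith [(quadratic_eq_zero_iff (pow_ne_zero 2 ht) hdiscrim _).2 (.inr hw)]

theorem sign_div_mul_sqrt_eq_mul_squircularScale {u : ℝ} (hu : u ≠ 0) (v : ℝ) :
    Real.sign (u * v) / (v * √2) * √(1 - √(1 - 4 * u ^ 2 * v ^ 2)) =
      u * squircularScale (u * v) := by
  rw [squircularScale, ← sign_div_mul_sqrt_mul_sqrt zero_le_two, mul_pow, ← mul_assoc 4]
  field_simp

theorem sqrt_one_add_sq_mul_squircularScale {u v : ℝ} (hu : u ≠ 0) (hv : v ≠ 0)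
    (h : 4 * u ^ 2 * v ^ 2 ≤ 1) :
    √(1 + (u * squircularScale (u * v)) ^ 2 * (v * squircularScale (u * v)) ^ 2) =
      squircularScale (u * v) := by
  have huv : u * v ≠ 0 := mul_ne_zero hu hv
  rw [Real.sqrt_eq_iff_eq_sq (by positivity) (squircularScale_pos huv).le,
    ← one_add_sq_mul_squircularScale_pow_four huv (by linarith)]
  ring

theorem two_squircular_right_inverse_general
    {u v x y : ℝ} (h : 4 * u ^ 2 * v ^ 2 ≤ 1) (hu : u ≠ 0) (hv : v ≠ 0)
    (hx : x = Real.sign (u * v) / (v * √2) * √(1 - √(1 - 4 * u ^ 2 * v ^ 2)))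
    (hy : y = Real.sign (u * v) / (u * √2) * √(1 - √(1 - 4 * u ^ 2 * v ^ 2))) :
    x / √(1 + x ^ 2 * y ^ 2) = u ∧ y / √(1 + x ^ 2 * y ^ 2) = v := by
  have hw : squircularScale (u * v) ≠ 0 := (squircularScale_pos (mul_ne_zero hu hv)).ne'
  have hx' : x = u * squircularScale (u * v) := by
    rw [hx, sign_div_mul_sqrt_eq_mul_squircularScale hu]
  have hy' : y = v * squircularScale (u * v) := by
    rw [hy, mul_right_comm 4, mul_comm u v, sign_div_mul_sqrt_eq_mul_squircularScale hv]
  rw [hx', hy', sqrt_one_add_sq_mul_squircularScale hu hv h]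
  exact ⟨mul_div_cancel_right₀ u hw, mul_div_cancel_right₀ v hw⟩

/-- The 2-Squircular square-to-disc map inverts the disc-to-square formulas. -/
theorem two_squircular_right_inverse
    (u v x y : ℝ)
    (hd : u ^ 2 + v ^ 2 ≤ 1) (hu0 : u ≠ 0) (hv0 : v ≠ 0)
    (hx : x = Real.sign (u * v) / (v * Real.sqrt 2) *
      Real.sqrt (1 - Real.sqrt (1 - 4 * u ^ 2 * v ^ 2)))
    (hy : y = Real.sign (u * v) / (u * Real.sqrt 2) *
      Real.sqrt (1 - Real.sqrt (1 - 4 * u ^ 2 * v ^ 2))) :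
    1 - 4 * u ^ 2 * v ^ 2 ≥ 0 ∧
    x / Real.sqrt (1 + x ^ 2 * y ^ 2) = u ∧
    y / Real.sqrt (1 + x ^ 2 * y ^ 2) = v :=
  have h := four_mul_sq_mul_sq_le_one hd
  ⟨sub_nonneg.2 h, two_squircular_right_inverse_general h hu0 hv0 hx hy⟩
end
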